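/- arXiv:2405.20807 — 2 statements merged into one kernel-verified Lean document; each statement's English description precedes it below -/
import Mathlib

section
/- Let β : (−1,1) → ℝ be a continuous, monotone increasing function with β(0) = 0, lim_{r→−1⁺} β(r) = −∞ and lim_{r→1⁻} β(r) = +∞, and let m₀ ∈ (−1,1). Then there exist positive constants c₃ and c₄ such that β(r)·(r − m₀) ≥ c₃·|β(r)| − c₄ for every r ∈ (−1,1). -/
open Set Filter

/-!
Monotonicity gives `β r * (r - y) ≥ β y * (r - y)` for every `y` in the domain, and for a fixed `y`
the right-hand side is bounded below because the domain is bounded. Now fix `a < m₀ < b` in the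
domain. Taking `y = b` when `β r ≥ 0` and `y = a` when `β r ≤ 0`, the difference between
`β r * (r - m₀)` and `β r * (r - y)` is `β r * (y - m₀)`, which is at least
`min (m₀ - a) (b - m₀) * |β r|`.
-/

section OrderedRing

variable {R : Type*} [CommRing R] [LinearOrder R] [IsStrictOrderedRing R]

lemma mul_sub_le_mul_sub_of_monotoneOn {f : R → R} {s : Set R} (hf : MonotoneOn f s) {x y : R}
    (hx : x ∈ s) (hy : y ∈ s) : f y * (x - y) ≤ f x * (x - y) := by
  have increments_nonneg : 0 ≤ (f x - f y) * (x - y) :=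
    (monovaryOn_id_iff.2 hf).sub_mul_sub_nonneg hy hx
  linarith

lemma min_mul_abs_le_mul_sub_or (t m a b : R) :
    min (m - a) (b - m) * |t| ≤ t * (a - m) ∨ min (m - a) (b - m) * |t| ≤ t * (b - m) := by
  rcases le_total t 0 with ht | ht
  · left
    calc min (m - a) (b - m) * |t| ≤ (m - a) * |t| := by gcongr; exact min_le_left _ _
      _ = t * (a - m) := by rw [abs_of_nonpos ht]; ring
  · right
    calc min (m - a) (b - m) * |t| ≤ (b - m) * |t| := by gcongr; exact min_le_right _ _
      _ = t * (b - m) := by rw [abs_of_nonneg ht, mul_comm]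

lemma min_mul_abs_add_min_le_mul_sub_of_monotoneOn {f : R → R} {s : Set R} (hf : MonotoneOn f s)
    {a b r : R} (ha : a ∈ s) (hb : b ∈ s) (hr : r ∈ s) (m : R) :
    min (m - a) (b - m) * |f r| + min (f a * (r - a)) (f b * (r - b)) ≤ f r * (r - m) := by
  rcases min_mul_abs_le_mul_sub_or (f r) m a b with h | h
  · linarith [min_le_left (f a * (r - a)) (f b * (r - b)),
      mul_sub_le_mul_sub_of_monotoneOn hf hr ha]
  · linarith [min_le_right (f a * (r - a)) (f b * (r - b)),
      mul_sub_le_mul_sub_of_monotoneOn hf hr hb]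

end OrderedRing

lemma neg_abs_mul_diam_le_mul_sub {s : Set ℝ} (hs : Bornology.IsBounded s) {x y : ℝ}
    (hx : x ∈ s) (hy : y ∈ s) (c : ℝ) : -(|c| * Metric.diam s) ≤ c * (x - y) := by
  refine neg_le_of_abs_le ?_
  rw [abs_mul, ← Real.dist_eq]
  gcongr
  exact Metric.dist_le_diam_of_mem hs hx hy

theorem mean_chemical_potential_bound_general {β : ℝ → ℝ} {s : Set ℝ} {a b m₀ : ℝ}
    (hs : Bornology.IsBounded s) (hβ_mono : MonotoneOn β s) (ha : a ∈ s) (hb : b ∈ s)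
    (hm₀ : m₀ ∈ Ioo a b) :
    ∃ c₃ c₄ : ℝ, 0 < c₃ ∧ 0 < c₄ ∧ ∀ r ∈ s, β r * (r - m₀) ≥ c₃ * |β r| - c₄ := by
  set M := max |β a| |β b|
  refine ⟨min (m₀ - a) (b - m₀), M * Metric.diam s + 1,
    lt_min (sub_pos.2 hm₀.1) (sub_pos.2 hm₀.2), by positivity, fun r hr ↦ ?_⟩
  have lower_bound : -(M * Metric.diam s) ≤ min (β a * (r - a)) (β b * (r - b)) := by
    refine le_min ((neg_le_neg ?_).trans (neg_abs_mul_diam_le_mul_sub hs hr ha _))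
      ((neg_le_neg ?_).trans (neg_abs_mul_diam_le_mul_sub hs hr hb _))
    · gcongr; exact le_max_left _ _
    · gcongr; exact le_max_right _ _
  linarith [min_mul_abs_add_min_le_mul_sub_of_monotoneOn hβ_mono ha hb hr m₀]

/-- Inequality (4.16): if `β` is continuous and monotone increasing on `(-1,1)` with
`β 0 = 0`, `β(r) → -∞` as `r → -1⁺`, `β(r) → +∞` as `r → 1⁻`, and `m₀ ∈ (-1,1)`, then
there are positive constants `c₃, c₄` with `β(r)(r - m₀) ≥ c₃ |β(r)| - c₄` on `(-1,1)`. -/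
theorem mean_chemical_potential_bound
    (β : ℝ → ℝ) (m₀ : ℝ)
    (hβ_cont : ContinuousOn β (Ioo (-1 : ℝ) 1))
    (hβ_mono : MonotoneOn β (Ioo (-1 : ℝ) 1))
    (hβ_zero : β 0 = 0)
    (hβ_bot : Tendsto β (nhdsWithin (-1 : ℝ) (Ioo (-1 : ℝ) 1)) atBot)
    (hβ_top : Tendsto β (nhdsWithin (1 : ℝ) (Ioo (-1 : ℝ) 1)) atTop)
    (hm₀ : m₀ ∈ Ioo (-1 : ℝ) 1) :
    ∃ c₃ c₄ : ℝ, 0 < c₃ ∧ 0 < c₄ ∧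
      ∀ r ∈ Ioo (-1 : ℝ) 1, β r * (r - m₀) ≥ c₃ * |β r| - c₄ := by
  obtain ⟨⟨a, ha, ham⟩, b, hmb, hb⟩ := hm₀.imp exists_between exists_between
  exact mean_chemical_potential_bound_general (Metric.isBounded_Ioo (-1) 1) hβ_mono
    ⟨ha, ham.trans hm₀.2⟩ ⟨hm₀.1.trans hmb, hb⟩ ⟨ham, hmb⟩
end

section
/- Let θ ∈ (0,1/2], c > 0 and E_∞ ∈ ℝ. Let E : [0,∞) → ℝ and g : [0,∞) → [0,∞) be continuous functions such that E is differentiable on (0,∞) with E'(t) = −g(t)² for all t > 0, E(t) ≥ E_∞ for all t ≥ 0, and g(t) ≥ c·(E(t) − E_∞)^{1−θ} for all t > 0. Then g is integrable on (0,∞) and ∫₀^∞ g(t) dt ≤ (E(0) − E_∞)^θ/(c·θ). -/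
open Set MeasureTheory

/-!
Put `Ψ s = (s - E_∞)^θ / (c θ)`. As long as `E > E_∞`, the Łojasiewicz–Simon inequality says
`1 ≤ Ψ'(E) g`, so `-(Ψ ∘ E)' = Ψ'(E) g² ≥ g`, and `∫ g` is at most the total decrease of `Ψ ∘ E`.
If `E` reaches `E_∞` at a finite time, then it stays there and `g` vanishes, but `Ψ ∘ E` may have
a corner at that time. This is why only right derivatives of `Ψ ∘ E` are used.
-/

open Filter

section DominatedByRightDerivative

variable {F F' φ : ℝ → ℝ} {a C : ℝ}

theorem integrableOn_Ioi_and_integral_le_of_intervalIntegral_le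
    (hφ_nonneg : ∀ t, a < t → 0 ≤ φ t) (hφ_int : ∀ b, IntegrableOn φ (Ioc a b))
    (hC : ∀ b, a ≤ b → ∫ t in a..b, φ t ≤ C) :
    IntegrableOn φ (Ioi a) ∧ ∫ t in Ioi a, φ t ≤ C := by
  have hC_norm : ∀ᶠ b in atTop, ∫ t in a..b, ‖φ t‖ ≤ C := by
    filter_upwards [eventually_ge_atTop a] with b hab
    have hφ_norm : ∫ t in a..b, ‖φ t‖ = ∫ t in a..b, φ t := by
      simp only [intervalIntegral.integral_of_le hab]
      exact setIntegral_congr_fun measurableSet_Ioc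
        fun t ht ↦ Real.norm_of_nonneg (hφ_nonneg t ht.1)
    exact hφ_norm.trans_le (hC b hab)
  have hφ_Ioi : IntegrableOn φ (Ioi a) :=
    integrableOn_Ioi_of_intervalIntegral_norm_bounded C a hφ_int tendsto_id hC_norm
  exact ⟨hφ_Ioi, le_of_tendsto (intervalIntegral_tendsto_integral_Ioi a hφ_Ioi tendsto_id)
    ((eventually_ge_atTop a).mono hC)⟩

theorem integrableOn_Ioi_and_integral_le_of_le_deriv_right
    (hF_cont : ContinuousOn F (Ici a))
    (hF_deriv : ∀ t, a < t → HasDerivWithinAt F (F' t) (Ioi t) t)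
    (hF_le : ∀ t, a ≤ t → F t ≤ C)
    (hφ_meas : AEStronglyMeasurable φ (volume.restrict (Ioi a)))
    (hφ_nonneg : ∀ t, a < t → 0 ≤ φ t) (hφ_le : ∀ t, a < t → φ t ≤ F' t) :
    IntegrableOn φ (Ioi a) ∧ ∫ t in Ioi a, φ t ≤ C - F a := by
  have hF_cont_Icc (b : ℝ) : ContinuousOn F (Icc a b) := hF_cont.mono Icc_subset_Ici_self
  have hF'_int (b : ℝ) : IntegrableOn F' (Ioc a b) :=
    intervalIntegral.integrableOn_deriv_right_of_nonneg (hF_cont_Icc b)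
      (fun t ht ↦ hF_deriv t ht.1) (fun t ht ↦ (hφ_nonneg t ht.1).trans (hφ_le t ht.1))
  have hφ_int (b : ℝ) : IntegrableOn φ (Ioc a b) := by
    refine (hF'_int b).mono' (hφ_meas.mono_set Ioc_subset_Ioi_self) ?_
    filter_upwards [ae_restrict_mem measurableSet_Ioc] with t ht
    exact (Real.norm_of_nonneg (hφ_nonneg t ht.1)).trans_le (hφ_le t ht.1)
  refine integrableOn_Ioi_and_integral_le_of_intervalIntegral_le hφ_nonneg hφ_int fun b hab ↦ ?_
  calc ∫ t in a..b, φ t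
      ≤ F b - F a := intervalIntegral.integral_le_sub_of_hasDeriv_right_of_le hab (hF_cont_Icc b)
        (fun t ht ↦ hF_deriv t ht.1) ((integrableOn_Icc_iff_integrableOn_Ioc).2 (hφ_int b))
        (fun t ht ↦ hφ_le t ht.1)
    _ ≤ C - F a := sub_le_sub_right (hF_le b hab) _

end DominatedByRightDerivative

section LowerBound

variable {E : ℝ → ℝ} {a m t E' : ℝ}

theorem hasDerivAt_eq_zero_of_eq_lowerBound (hE_lower : ∀ s, a ≤ s → m ≤ E s) (ht : a < t)
    (hEt : E t = m) (hE_deriv : HasDerivAt E E' t) : E' = 0 := by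
  have hmin : IsLocalMin E t := by
    filter_upwards [Ioi_mem_nhds ht] with s hs
    exact hEt.trans_le (hE_lower s (mem_Ioi.1 hs).le)
  exact hmin.hasDerivAt_eq_zero hE_deriv

theorem hasDerivWithinAt_Ioi_comp_of_antitoneOn {Ψ Ψ' : ℝ → ℝ}
    (hΨ_deriv : ∀ s, m < s → HasDerivAt Ψ (Ψ' s) s) (hE_anti : AntitoneOn E (Ici a))
    (hE_lower : ∀ s, a ≤ s → m ≤ E s) (ht : a < t) (hE_deriv : HasDerivAt E E' t) :
    HasDerivWithinAt (Ψ ∘ E) (Ψ' (E t) * E') (Ioi t) t := by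
  rcases (hE_lower t ht.le).eq_or_lt with hEt | hEt
  · have hE_const : ∀ s ∈ Ioi t, (Ψ ∘ E) s = Ψ m := fun s hs ↦
      have has : a ≤ s := ht.le.trans (mem_Ioi.1 hs).le
      congrArg Ψ <| le_antisymm (hEt ▸ hE_anti ht.le has (mem_Ioi.1 hs).le) (hE_lower s has)
    rw [hasDerivAt_eq_zero_of_eq_lowerBound hE_lower ht hEt.symm hE_deriv, mul_zero]
    exact (hasDerivWithinAt_const t _ (Ψ m)).congr hE_const (congrArg Ψ hEt.symm)
  · exact ((hΨ_deriv _ hEt).comp t hE_deriv).hasDerivWithinAt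

end LowerBound

/-- `Ψ` is a desingularizing function, in the sense of Kurdyka, above the level `m`: it turns an
energy `E ≥ m` into a quantity `Ψ ∘ E` whose decrease controls the length of the trajectory.
The derivative `Ψ'` is a separate argument whose values matter on `(m, ∞)` only. Kurdyka's
normalization `Ψ m = 0` and concavity are not part of this definition. -/
structure IsDesingularizing (Ψ Ψ' : ℝ → ℝ) (m : ℝ) : Prop where
  continuousOn : ContinuousOn Ψ (Ici m)
  hasDerivAt : ∀ s, m < s → HasDerivAt Ψ (Ψ' s) s
  deriv_nonneg : ∀ s, m < s → 0 ≤ Ψ' s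

theorem IsDesingularizing.monotoneOn {Ψ Ψ' : ℝ → ℝ} {m : ℝ} (hΨ : IsDesingularizing Ψ Ψ' m) :
    MonotoneOn Ψ (Ici m) := by
  refine monotoneOn_of_hasDerivWithinAt_nonneg (f' := Ψ') (convex_Ici m) hΨ.continuousOn ?_ ?_ <;>
    rw [interior_Ici]
  · exact fun s hs ↦ (hΨ.hasDerivAt s hs).hasDerivWithinAt
  · exact hΨ.deriv_nonneg

theorem isDesingularizing_rpow {θ c : ℝ} (hθ : 0 < θ) (hc : 0 < c) (m : ℝ) :
    IsDesingularizing (fun s ↦ (s - m) ^ θ / (c * θ)) (fun s ↦ (s - m) ^ (θ - 1) / c) m where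
  continuousOn := by
    have hsub : ContinuousOn (fun s ↦ s - m) (Ici m) := by fun_prop
    exact (hsub.rpow_const fun _ _ ↦ Or.inr hθ.le).div_const _
  hasDerivAt s hs := by
    have hrpow := (((hasDerivAt_id s).sub_const m).rpow_const (p := θ)
      (Or.inl (sub_pos.2 hs).ne')).div_const (c * θ)
    refine hrpow.congr_deriv ?_
    simp only [id]
    field_simp
  deriv_nonneg s hs := div_nonneg (Real.rpow_nonneg (sub_pos.2 hs).le _) hc.le

section EnergyIdentity

variable {E g : ℝ → ℝ} {a m : ℝ}

theorem antitoneOn_of_hasDerivAt_neg_sq (hE_cont : ContinuousOn E (Ici a))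
    (hE_deriv : ∀ t, a < t → HasDerivAt E (-(g t) ^ 2) t) : AntitoneOn E (Ici a) := by
  refine antitoneOn_of_hasDerivWithinAt_nonpos (f' := fun t ↦ -(g t) ^ 2) (convex_Ici a)
    hE_cont ?_ fun t _ ↦ neg_nonpos.2 (sq_nonneg (g t))
  rw [interior_Ici]
  exact fun t ht ↦ (hE_deriv t ht).hasDerivWithinAt

theorem aestronglyMeasurable_of_hasDerivAt_neg_sq
    (hE_deriv : ∀ t, a < t → HasDerivAt E (-(g t) ^ 2) t) (hg_nonneg : ∀ t, a < t → 0 ≤ g t) :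
    AEStronglyMeasurable g (volume.restrict (Ioi a)) := by
  have hmeas : Measurable fun t ↦ √(-deriv E t) := (measurable_deriv E).neg.sqrt
  refine hmeas.aestronglyMeasurable.congr ?_
  filter_upwards [ae_restrict_mem measurableSet_Ioi] with t ht
  rw [(hE_deriv t ht).deriv, neg_neg, Real.sqrt_sq (hg_nonneg t ht)]

theorem integrableOn_Ioi_and_integral_le_of_isDesingularizing {Ψ Ψ' : ℝ → ℝ}
    (hΨ : IsDesingularizing Ψ Ψ' m) (hE_cont : ContinuousOn E (Ici a))
    (hE_deriv : ∀ t, a < t → HasDerivAt E (-(g t) ^ 2) t) (hE_lower : ∀ t, a ≤ t → m ≤ E t)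
    (hKL : ∀ t, a < t → m < E t → 1 ≤ Ψ' (E t) * g t) :
    IntegrableOn g (Ioi a) ∧ ∫ t in Ioi a, g t ≤ Ψ (E a) - Ψ m := by
  have hE_anti : AntitoneOn E (Ici a) := antitoneOn_of_hasDerivAt_neg_sq hE_cont hE_deriv
  have hg_cases : ∀ t, a < t → g t = 0 ∨ 0 < g t ∧ 1 ≤ Ψ' (E t) * g t := fun t ht ↦ by
    rcases (hE_lower t ht.le).eq_or_lt with hEt | hEt
    · have hsq := hasDerivAt_eq_zero_of_eq_lowerBound hE_lower ht hEt.symm (hE_deriv t ht)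
      exact .inl (sq_eq_zero_iff.1 (neg_eq_zero.1 hsq))
    · have hKLt := hKL t ht hEt
      exact .inr ⟨pos_of_mul_pos_right (one_pos.trans_le hKLt) (hΨ.deriv_nonneg _ hEt), hKLt⟩
  have hg_nonneg : ∀ t, a < t → 0 ≤ g t := fun t ht ↦
    (hg_cases t ht).elim (fun h ↦ h.ge) fun h ↦ h.1.le
  have hg_le : ∀ t, a < t → g t ≤ -(Ψ' (E t) * -(g t) ^ 2) := fun t ht ↦ by
    rcases hg_cases t ht with hg | ⟨hg, hKLt⟩
    · simp [hg]
    · calc g t = 1 * g t := (one_mul _).symm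
        _ ≤ Ψ' (E t) * g t * g t := mul_le_mul_of_nonneg_right hKLt hg.le
        _ = -(Ψ' (E t) * -(g t) ^ 2) := by ring
  have hbound := integrableOn_Ioi_and_integral_le_of_le_deriv_right (F := fun t ↦ -Ψ (E t))
    (C := -Ψ m) (hΨ.continuousOn.comp hE_cont hE_lower).neg
    (fun t ht ↦ (hasDerivWithinAt_Ioi_comp_of_antitoneOn hΨ.hasDerivAt hE_anti hE_lower ht
      (hE_deriv t ht)).neg)
    (fun t ht ↦ neg_le_neg (hΨ.monotoneOn self_mem_Ici (hE_lower t ht) (hE_lower t ht)))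
    (aestronglyMeasurable_of_hasDerivAt_neg_sq hE_deriv hg_nonneg) hg_nonneg hg_le
  rwa [neg_sub_neg] at hbound

end EnergyIdentity

theorem one_le_rpow_sub_one_div_mul {θ c x y : ℝ} (hc : 0 < c) (hx : 0 < x)
    (h : c * x ^ (1 - θ) ≤ y) : 1 ≤ x ^ (θ - 1) / c * y := by
  have hcancel : x ^ (θ - 1) * x ^ (1 - θ) = 1 := by
    rw [← Real.rpow_add hx, sub_add_sub_cancel, sub_self, Real.rpow_zero]
  calc 1 = x ^ (θ - 1) / c * (c * x ^ (1 - θ)) := by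
        rw [← mul_assoc, div_mul_cancel₀ _ hc.ne', hcancel]
    _ ≤ x ^ (θ - 1) / c * y := by gcongr

theorem lojasiewicz_simon_integrability_general {θ c E_inf a : ℝ} {E g : ℝ → ℝ}
    (hθ : 0 < θ) (hc : 0 < c) (hE_cont : ContinuousOn E (Ici a))
    (hE_deriv : ∀ t, a < t → HasDerivAt E (-(g t) ^ 2) t)
    (hE_lower : ∀ t, a ≤ t → E_inf ≤ E t)
    (hLS : ∀ t, a < t → E_inf < E t → c * (E t - E_inf) ^ (1 - θ) ≤ g t) :
    IntegrableOn g (Ioi a) ∧ ∫ t in Ioi a, g t ≤ (E a - E_inf) ^ θ / (c * θ) := by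
  have hbound := integrableOn_Ioi_and_integral_le_of_isDesingularizing
    (isDesingularizing_rpow hθ hc E_inf) hE_cont hE_deriv hE_lower
    fun t ht hEt ↦ one_le_rpow_sub_one_div_mul hc (sub_pos.2 hEt) (hLS t ht hEt)
  rwa [sub_self, Real.zero_rpow hθ.ne', zero_div, sub_zero] at hbound

/-- The abstract Łojasiewicz–Simon integrability argument: if `E' = -g²` on `(0,∞)`,
`E ≥ E_∞`, and `g ≥ c (E - E_∞)^(1-θ)` with `θ ∈ (0, 1/2]` and `c > 0`, then `g` is
integrable on `(0,∞)` and `∫₀^∞ g ≤ (E 0 - E_∞)^θ / (c θ)`. -/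
theorem lojasiewicz_simon_integrability
    (θ c E_inf : ℝ) (E g : ℝ → ℝ)
    (hθ : θ ∈ Ioc (0 : ℝ) (1 / 2)) (hc : 0 < c)
    (hE_cont : ContinuousOn E (Ici (0 : ℝ)))
    (hg_cont : ContinuousOn g (Ici (0 : ℝ)))
    (hg_nonneg : ∀ t : ℝ, 0 ≤ t → 0 ≤ g t)
    (hE_deriv : ∀ t : ℝ, 0 < t → HasDerivAt E (-(g t) ^ 2) t)
    (hE_lower : ∀ t : ℝ, 0 ≤ t → E_inf ≤ E t)
    (hLS : ∀ t : ℝ, 0 < t → c * (E t - E_inf) ^ (1 - θ) ≤ g t) :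
    IntegrableOn g (Ioi (0 : ℝ)) volume ∧
      ∫ t in Ioi (0 : ℝ), g t ≤ (E 0 - E_inf) ^ θ / (c * θ) :=
  lojasiewicz_simon_integrability_general hθ.1 hc hE_cont hE_deriv hE_lower fun t ht _ ↦ hLS t ht
end
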